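/- arXiv:2506.22428 — 2 statements merged into one kernel-verified Lean document; each statement's English description precedes it below -/
import Mathlib

section
/- For an IPPA sequence on a proper, convex, lower semicontinuous function h with errors and step sizes satisfying (A1)–(A5), the subgradient sequences (s⋆^k)_{k≥1} and (s^k)_{k≥1} are bounded in norm. -/
open scoped RealInnerProductSpace
open Filter Asymptotics

noncomputable section

/-- The Fenchel conjugate of an `EReal`-valued function on a real inner product space. -/
def fenchel {Y : Type*} [NormedAddCommGroup Y] [InnerProductSpace ℝ Y]
    (h : Y → EReal) (s : Y) : EReal :=
  ⨆ l : Y, ((⟪s, l⟫ : ℝ) : EReal) - h l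

/-- The convex subdifferential of an `EReal`-valued function: `v ∈ ∂h(u)` iff
`h w ≥ h u + ⟪v, w − u⟫` for all `w`. -/
def subdiff {Y : Type*} [NormedAddCommGroup Y] [InnerProductSpace ℝ Y]
    (h : Y → EReal) (u : Y) : Set Y :=
  {v : Y | ∀ w : Y, h u + ((⟪v, w - u⟫ : ℝ) : EReal) ≤ h w}

/-! Optimality of the proximal point `λ⋆ᵏ⁺¹` says `s⋆ᵏ⁺¹ ∈ ∂h(λ⋆ᵏ⁺¹)`, and all that is needed of
`∂h` is that it is monotone. Pairing the subgradients at `λ⋆ᵏ⁺²` and `λ⋆ᵏ⁺¹` places `s⋆ᵏ⁺²` in the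
ball with diameter `[s⋆ᵏ⁺¹, eᵏ⁺¹ / γₖ₊₁]`, where `eᵏ⁺¹ = λᵏ⁺¹ - λ⋆ᵏ⁺¹`. Hence
`‖s⋆ᵏ⁺²‖ ≤ ‖s⋆ᵏ⁺¹‖ + εₖ₊₁ / γₖ₊₁`, and these increments are summable. Finally `sᵏ⁺¹` differs from
`s⋆ᵏ⁺¹` by `eᵏ⁺¹ / γₖ`, which is bounded. -/

section Sequences

theorem isBigO_mul_right_of_le {α : Type*} {l : Filter α} {f g : α → ℝ} {c : ℝ} (hc : 0 < c)
    (hg : ∀ x, c ≤ g x) : f =O[l] fun x => f x * g x := by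
  refine IsBigO.of_bound c⁻¹ (.of_forall fun x => ?_)
  rw [norm_mul, ← mul_assoc, mul_comm c⁻¹, mul_assoc]
  refine le_mul_of_one_le_right (norm_nonneg _) ?_
  rw [inv_mul_eq_div, one_le_div hc]
  exact (hg x).trans (Real.le_norm_self _)

theorem summable_of_summable_mul_of_le {f g : ℕ → ℝ} {c : ℝ} (hc : 0 < c) (hg : ∀ k, c ≤ g k)
    (hfg : Summable fun k => f k * g k) : Summable f :=
  summable_of_isBigO_nat hfg (isBigO_mul_right_of_le hc hg)

theorem bddAbove_range_of_mul_isBigO_one_div_sqrt {f g : ℕ → ℝ} {c : ℝ} (hc : 0 < c)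
    (hg : ∀ k, c ≤ g k) (hfg : (fun k => f k * g k) =O[atTop] fun k => 1 / √(g k)) :
    BddAbove (Set.range f) := by
  have hsqrt : (fun k => 1 / √(g k)) =O[atTop] fun _ => (1 : ℝ) := by
    refine (isBigO_mul_right_of_le (Real.sqrt_pos.2 hc)
      fun k => Real.sqrt_le_sqrt (hg k)).congr_right fun k => ?_
    exact one_div_mul_cancel (Real.sqrt_pos.2 (hc.trans_le (hg k))).ne'
  obtain ⟨B, hB⟩ :=
    isBigO_one_nat_atTop_iff.1 (((isBigO_mul_right_of_le hc hg).trans hfg).trans hsqrt)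
  exact ⟨B, Set.forall_mem_range.2 fun k => (Real.le_norm_self _).trans (hB k)⟩

theorem le_sum_range_succ_of_nonneg {γ : ℕ → ℝ} (hγ : ∀ k, 0 ≤ γ k) (k : ℕ) :
    γ 0 ≤ ∑ i ∈ Finset.range (k + 1), γ i :=
  Finset.single_le_sum (fun i _ => hγ i) (Finset.mem_range.2 k.succ_pos)

theorem bddAbove_range_of_le_add_summable {u δ : ℕ → ℝ} (hδ : Summable δ)
    (hu : ∀ k, u (k + 1) ≤ u k + δ k) : BddAbove (Set.range u) := by
  obtain ⟨B, hB⟩ := hδ.hasSum.tendsto_sum_nat.bddAbove_range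
  refine ⟨u 0 + B, Set.forall_mem_range.2 fun n => ?_⟩
  have hsum : u n - u 0 ≤ ∑ i ∈ Finset.range n, δ i := by
    rw [← Finset.sum_range_sub]
    exact Finset.sum_le_sum fun i _ => sub_le_iff_le_add'.2 (hu i)
  linarith [hB (Set.mem_range_self n)]

end Sequences

theorem norm_inv_smul_le_div {E : Type*} [SeminormedAddCommGroup E] [NormedSpace ℝ E] {c r : ℝ}
    (hc : 0 < c) {x : E} (hx : ‖x‖ ≤ r) :
    ‖c⁻¹ • x‖ ≤ r / c := by
  rw [norm_smul, norm_inv, Real.norm_of_nonneg hc.le, inv_mul_eq_div]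
  gcongr

section InnerProduct

variable {Y : Type*} [NormedAddCommGroup Y] [InnerProductSpace ℝ Y]

theorem norm_add_le_norm_sub_of_inner_nonpos {x y : Y} (hxy : ⟪x, y⟫ ≤ 0) :
    ‖x + y‖ ≤ ‖x - y‖ := by
  rw [← sq_le_sq₀ (norm_nonneg _) (norm_nonneg _), norm_add_sq_real, norm_sub_sq_real]
  linarith

theorem norm_le_add_norm_of_inner_sub_sub_nonpos {a b d : Y} (habd : ⟪a - b, a - d⟫ ≤ 0) :
    ‖a‖ ≤ ‖b‖ + ‖d‖ := by
  have hball : ‖a - b + (a - d)‖ ≤ ‖d - b‖ := by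
    simpa only [sub_sub_sub_cancel_left] using norm_add_le_norm_sub_of_inner_nonpos habd
  have htwo : 2 * ‖a‖ ≤ ‖a - b + (a - d)‖ + ‖b + d‖ := by
    calc 2 * ‖a‖ = ‖(2 : ℝ) • a‖ := by rw [norm_smul, Real.norm_two]
      _ = ‖a - b + (a - d) + (b + d)‖ := by congr 1; module
      _ ≤ _ := norm_add_le _ _
  linarith [norm_sub_le d b, norm_add_le b d]

/-- Monotonicity of a set-valued operator `T : Y ⇉ Y`: any two points of its graph satisfy
`⟪u - v, x - y⟫ ≥ 0`. It abstracts the property of `subdiff h` on which the iteration rests;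
maximality is not part of the notion. -/
def IsMonotoneOperator (T : Y → Set Y) : Prop :=
  ∀ ⦃x y u v : Y⦄, u ∈ T x → v ∈ T y → 0 ≤ ⟪u - v, x - y⟫

theorem isMonotoneOperator_subdiff {h : Y → EReal} (hbot : ∀ u, h u ≠ ⊥) (htop : ∃ u, h u ≠ ⊤) :
    IsMonotoneOperator (subdiff h) := by
  have ne_top {x u : Y} (hu : u ∈ subdiff h x) : h x ≠ ⊤ := by
    obtain ⟨w, hw⟩ := htop
    intro hx
    exact hw (top_le_iff.1 (by simpa only [hx, EReal.top_add_coe] using hu w))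
  intro x y u v hu hv
  have hxy := hu y
  have hyx := hv x
  lift h x to ℝ using ⟨ne_top hu, hbot x⟩ with a
  lift h y to ℝ using ⟨ne_top hv, hbot y⟩ with b
  norm_cast at hxy hyx
  rw [← neg_sub x y, inner_neg_right] at hxy
  rw [inner_sub_left]
  linarith

theorem IsMonotoneOperator.norm_resolvent_le {T : Y → Set Y} (hT : IsMonotoneOperator T) {γ : ℝ}
    (hγ : 0 < γ) {x y p v : Y} (hp : γ⁻¹ • (x - p) ∈ T p) (hv : v ∈ T y) :
    ‖γ⁻¹ • (x - p)‖ ≤ ‖v‖ + ‖γ⁻¹ • (x - y)‖ := by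
  apply norm_le_add_norm_of_inner_sub_sub_nonpos
  have hdiff : γ⁻¹ • (x - p) - γ⁻¹ • (x - y) = -(γ⁻¹ • (p - y)) := by module
  rw [hdiff, inner_neg_right, real_inner_smul_right]
  exact neg_nonpos.2 (mul_nonneg (inv_nonneg.2 hγ.le) (hT hp hv))

/-- `p` is a proximal point of `x` for `h` with step size `γ`, that is, a minimizer of
`h + ‖x - ·‖² / (2γ)`. Neither uniqueness nor finiteness of the minimum is required. -/
def IsProxPoint (h : Y → EReal) (γ : ℝ) (x p : Y) : Prop :=
  ∀ μ : Y, h p + ((‖x - p‖ ^ 2 / (2 * γ) : ℝ) : EReal)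
    ≤ h μ + ((‖x - μ‖ ^ 2 / (2 * γ) : ℝ) : EReal)

theorem norm_sub_segment_sq_div {γ : ℝ} (hγ : γ ≠ 0) (x p q : Y) (t : ℝ) :
    ‖x - ((1 - t) • p + t • q)‖ ^ 2 / (2 * γ) = ‖x - p‖ ^ 2 / (2 * γ)
      - t * ⟪γ⁻¹ • (x - p), q - p⟫ + t * (t * (‖q - p‖ ^ 2 / (2 * γ))) := by
  have hsegment : x - ((1 - t) • p + t • q) = (x - p) - t • (q - p) := by module
  rw [hsegment, norm_sub_sq_real, norm_smul, real_inner_smul_right, real_inner_smul_left, mul_pow,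
    Real.norm_eq_abs, sq_abs]
  field_simp

theorem IsProxPoint.add_inner_le {h : Y → EReal} {γ : ℝ} {x p q : Y} (hprox : IsProxPoint h γ x p)
    (hcvx : ∀ u v : Y, ∀ a b : ℝ, 0 ≤ a → 0 ≤ b → a + b = 1 →
      h (a • u + b • v) ≤ (a : EReal) * h u + (b : EReal) * h v)
    (hγ : 0 < γ) {P Q : ℝ} (hP : h p = P) (hQ : h q = Q) :
    P + ⟪γ⁻¹ • (x - p), q - p⟫ ≤ Q := by
  have hsegment : ∀ t ∈ Set.Ioc (0 : ℝ) 1,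
      P + ⟪γ⁻¹ • (x - p), q - p⟫ - Q ≤ t * (‖q - p‖ ^ 2 / (2 * γ)) := by
    rintro t ⟨ht0, ht1⟩
    have hle := (hprox ((1 - t) • p + t • q)).trans
      (add_le_add_left (hcvx p q (1 - t) t (sub_nonneg.2 ht1) ht0.le (sub_add_cancel 1 t)) _)
    rw [hP, hQ] at hle
    norm_cast at hle
    rw [norm_sub_segment_sq_div hγ.ne'] at hle
    exact le_of_mul_le_mul_left (by linarith) ht0
  have hlim : Tendsto (fun t : ℝ => t * (‖q - p‖ ^ 2 / (2 * γ))) (nhdsWithin 0 (Set.Ioi 0))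
      (nhds 0) :=
    ((continuous_mul_const _).tendsto' 0 0 (zero_mul _)).mono_left nhdsWithin_le_nhds
  refine sub_nonpos.1 (ge_of_tendsto hlim ?_)
  filter_upwards [Ioc_mem_nhdsGT zero_lt_one] with t ht using hsegment t ht

theorem IsProxPoint.inv_smul_sub_mem_subdiff {h : Y → EReal} {γ : ℝ} {x p : Y}
    (hprox : IsProxPoint h γ x p)
    (hcvx : ∀ u v : Y, ∀ a b : ℝ, 0 ≤ a → 0 ≤ b → a + b = 1 →
      h (a • u + b • v) ≤ (a : EReal) * h u + (b : EReal) * h v)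
    (hγ : 0 < γ) : γ⁻¹ • (x - p) ∈ subdiff h p := by
  intro q
  have hle := hprox q
  cases hP : h p with
  | bot => simp only [EReal.bot_add, bot_le]
  | top =>
    rw [hP, EReal.top_add_coe, top_le_iff] at hle
    have hQ : h q = ⊤ := by_contra fun hq => EReal.add_ne_top hq (EReal.coe_ne_top _) hle
    rw [hQ]
    exact le_top
  | coe P =>
    cases hQ : h q with
    | bot =>
      rw [hP, hQ, EReal.bot_add, le_bot_iff] at hle
      exact absurd hle (EReal.coe_ne_bot _)
    | top => exact le_top
    | coe Q => exact_mod_cast hprox.add_inner_le hcvx hγ hP hQ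

theorem statement4_general {T : Y → Set Y} (hT : IsMonotoneOperator T)
    {γ ε : ℕ → ℝ} (hγ : ∀ k, 0 < γ k) {lam lamstar sstar ss : ℕ → Y}
    (hmem : ∀ k, sstar (k + 1) ∈ T (lamstar (k + 1)))
    (hsstar : ∀ k, sstar (k + 1) = (γ k)⁻¹ • (lam k - lamstar (k + 1)))
    (herr : ∀ k, ‖lam (k + 1) - lamstar (k + 1)‖ ≤ ε (k + 1))
    (hss : ∀ k, ss (k + 1) = (γ k)⁻¹ • (lam k - lam (k + 1)))
    (hsum : Summable fun k => ε (k + 1) / γ (k + 1))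
    (hbdd : BddAbove (Set.range fun k => ε (k + 1) / γ k)) :
    ∃ M : ℝ, (∀ k, ‖sstar (k + 1)‖ ≤ M) ∧ (∀ k, ‖ss (k + 1)‖ ≤ M) := by
  have hstep (k : ℕ) : ‖sstar (k + 2)‖ ≤ ‖sstar (k + 1)‖ + ε (k + 1) / γ (k + 1) := by
    have hresolvent := hT.norm_resolvent_le (hγ (k + 1)) (hsstar (k + 1) ▸ hmem (k + 1)) (hmem k)
    rw [← hsstar (k + 1)] at hresolvent
    linarith [norm_inv_smul_le_div (hγ (k + 1)) (herr k)]
  obtain ⟨M, hM⟩ :=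
    bddAbove_range_of_le_add_summable (u := fun k => ‖sstar (k + 1)‖) hsum hstep
  obtain ⟨B, hB⟩ := hbdd
  rw [mem_upperBounds, Set.forall_mem_range] at hM hB
  refine ⟨max M (M + B), fun k => le_max_of_le_left (hM k), fun k => le_max_of_le_right ?_⟩
  calc ‖ss (k + 1)‖
      = ‖sstar (k + 1) - (γ k)⁻¹ • (lam (k + 1) - lamstar (k + 1))‖ := by
        rw [hss, hsstar]; congr 1; module
    _ ≤ ‖sstar (k + 1)‖ + ‖(γ k)⁻¹ • (lam (k + 1) - lamstar (k + 1))‖ := norm_sub_le _ _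
    _ ≤ M + B := add_le_add (hM k) ((norm_inv_smul_le_div (hγ k) (herr k)).trans (hB k))

end InnerProduct

theorem statement4
    {Y : Type*}
    [NormedAddCommGroup Y] [InnerProductSpace ℝ Y] [CompleteSpace Y]
    (h : Y → EReal)
    (hh_bot : ∀ u : Y, h u ≠ ⊥) (hh_top : ∃ u : Y, h u ≠ ⊤)
    (hh_lsc : LowerSemicontinuous h)
    (hh_cvx : ∀ u v : Y, ∀ a b : ℝ, 0 ≤ a → 0 ≤ b → a + b = 1 →
      h (a • u + b • v) ≤ (a : EReal) * h u + (b : EReal) * h v)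
    (γ : ℕ → ℝ) (hγ : ∀ k : ℕ, 0 < γ k) (ε : ℕ → ℝ) (hε : ∀ k : ℕ, 0 ≤ ε k)
    (lam lamstar sstar ss : ℕ → Y)
    (hmin : ∀ (k : ℕ) (μ : Y),
      h (lamstar (k+1)) + ((‖lam k - lamstar (k+1)‖ ^ 2 / (2 * γ k) : ℝ) : EReal)
        ≤ h μ + ((‖lam k - μ‖ ^ 2 / (2 * γ k) : ℝ) : EReal))
    (hsstar : ∀ k : ℕ, sstar (k+1) = (γ k)⁻¹ • (lam k - lamstar (k+1)))
    (herr : ∀ k : ℕ, ‖lam (k+1) - lamstar (k+1)‖ ≤ ε (k+1))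
    (hss : ∀ k : ℕ, ss (k+1) = (γ k)⁻¹ • (lam k - lam (k+1)))
    (A1 : Summable ε)
    (A2 : (fun k : ℕ => ε (k+1) / γ k * ∑ i ∈ Finset.range (k+1), γ i)
        =O[atTop] fun k : ℕ => 1 / Real.sqrt (∑ i ∈ Finset.range (k+1), γ i))
    (A3 : Summable fun k : ℕ => (ε (k+1) / γ (k+1)) ^ 2 * ∑ i ∈ Finset.range (k+1), γ i)
    (A4 : Summable fun k : ℕ => ε (k+1) / γ (k+1) * ∑ i ∈ Finset.range (k+1), γ i)
    (A5 : Tendsto (fun n : ℕ => ∑ i ∈ Finset.range n, γ i) atTop atTop)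
    :
    ∃ M : ℝ, (∀ k : ℕ, ‖sstar (k+1)‖ ≤ M) ∧ (∀ k : ℕ, ‖ss (k+1)‖ ≤ M) := by
  have hΓ := le_sum_range_succ_of_nonneg fun k => (hγ k).le
  exact statement4_general (isMonotoneOperator_subdiff hh_bot hh_top) hγ
    (fun k => hsstar k ▸ IsProxPoint.inv_smul_sub_mem_subdiff (hmin k) hh_cvx (hγ k))
    hsstar herr hss
    (summable_of_summable_mul_of_le (hγ 0) hΓ A4)
    (bddAbove_range_of_mul_isBigO_one_div_sqrt (hγ 0) hΓ A2)
end
end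

section
/- For an IPPA sequence on a proper, convex, lower semicontinuous function h with errors and step sizes satisfying (A1)–(A5), the sequences s⋆^k and s^k both converge strongly to s̄, the element of minimal norm in cl(range ∂h). If moreover h*(s̄) < ∞, then the following rates hold: (a) ‖s⋆^N‖² − ‖s̄‖² = O(1/∑_{i=0}^{N−1} γ_i); (b) ‖s^N‖² − ‖s̄‖² = O(1/∑_{i=0}^{N−1} γ_i); (c) ‖s⋆^N − s̄‖ = O(1/√(∑_{i=0}^{N−1} γ_i)); (d) ‖s^N − s̄‖ = O(1/√(∑_{i=0}^{N−1} γ_i)). -/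
open scoped RealInnerProductSpace
open Filter Asymptotics

noncomputable section

/-!
Write `Γ` for the sum of the first step sizes. The exact residuals `s⋆` are subgradients of `h` at
the exact proximal points `λ⋆`, so monotonicity of `∂h` makes `‖s⋆‖²` almost nonincreasing. For
`w` in the domain of `h*`, the energy `Γ (‖s⋆‖² - ‖w‖²) + 2 (h(λ⋆) - ⟪w, λ⋆⟫)` therefore grows by
at most a summable amount per step, and its second summand is bounded below by `-2 h*(w)`. Hence
`‖s⋆‖² - ‖w‖² ≤ K / Γ`.

Letting `w` range over the domain of `h*` shows that `s̄` has minimal norm not only in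
`cl (range ∂h)` but in the closure of that domain. The latter is convex for elementary reasons,
whereas convexity of `cl (range ∂h)` rests on maximal monotonicity. The projection inequality then
gives `‖s⋆ - s̄‖² ≤ ‖s⋆‖² - ‖s̄‖²`: convergence of norms is strong convergence, with the rate read
off from `w = s̄`. The errors perturb `s⋆` into `s` by only `O(1 / Γ)`.
-/

section Sequences

lemma bddAbove_range_of_succ_le_add {a b : ℕ → ℝ} (hb₀ : ∀ k, 0 ≤ b k) (hb : Summable b)
    (hab : ∀ k, a (k + 1) ≤ a k + b k) : BddAbove (Set.range a) := by
  have partial_sums (n : ℕ) : a n ≤ a 0 + ∑ k ∈ Finset.range n, b k := by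
    induction n with
    | zero => simp
    | succ n ih => rw [Finset.sum_range_succ]; linarith [hab n]
  refine ⟨a 0 + ∑' k, b k, Set.forall_mem_range.2 fun n => (partial_sums n).trans ?_⟩
  gcongr
  exact hb.sum_le_tsum _ fun k _ => hb₀ k

lemma isBigO_comp_succ_iff {E F : Type*} [Norm E] [Norm F] {f : ℕ → E} {g : ℕ → F} :
    ((fun n => f (n + 1)) =O[atTop] fun n => g (n + 1)) ↔ f =O[atTop] g := by
  conv_rhs => rw [← map_add_atTop_eq_nat 1, isBigO_map]
  rfl

variable {α : Type*} {l : Filter α} {G : α → ℝ}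

lemma isBigO_one_div_sqrt_one_of_tendsto_atTop (hG : Tendsto G l atTop) :
    (fun x => 1 / √(G x)) =O[l] fun _ => (1 : ℝ) :=
  ((Real.tendsto_sqrt_atTop.comp hG).const_div_atTop 1).isBigO_one ℝ

lemma isBigO_one_div_one_div_sqrt_of_tendsto_atTop (hG : Tendsto G l atTop) :
    (fun x => 1 / G x) =O[l] fun x => 1 / √(G x) := by
  have product := (isBigO_one_div_sqrt_one_of_tendsto_atTop hG).mul
    (isBigO_refl (fun x => 1 / √(G x)) l)
  refine (product.congr' ?_ .rfl).congr_right fun x => one_mul _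
  filter_upwards [hG.eventually_ge_atTop 0] with x hx
  rw [one_div_mul_one_div, Real.mul_self_sqrt hx]

lemma isBigO_one_div_sqrt_of_sq_isBigO {f : α → ℝ} (hG : ∀ x, 0 ≤ G x)
    (hf : (fun x => f x ^ 2) =O[l] fun x => 1 / G x) : f =O[l] fun x => 1 / √(G x) := by
  refine IsBigO.of_pow two_ne_zero (hf.congr_right fun x => ?_)
  rw [Pi.pow_apply, div_pow, one_pow, Real.sq_sqrt (hG x)]

lemma isBigO_norm_sq_sub_norm_sq {E : Type*} [SeminormedAddCommGroup E] {x y : α → E} {g : α → ℝ}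
    (hx : x =O[l] fun _ => (1 : ℝ)) (hy : y =O[l] fun _ => (1 : ℝ))
    (hxy : (fun i => x i - y i) =O[l] g) : (fun i => ‖x i‖ ^ 2 - ‖y i‖ ^ 2) =O[l] g := by
  have norm_diff : (fun i => ‖x i‖ - ‖y i‖) =O[l] g :=
    (IsBigO.of_norm_le fun i => abs_norm_sub_norm_le (x i) (y i)).trans hxy.norm_left
  exact ((hx.norm_left.add hy.norm_left).mul norm_diff).congr
    (fun i => by ring) (fun i => one_mul _)

end Sequences

/-- `x` is an element of minimal norm of the set `K`. -/
structure IsMinNormIn {E : Type*} [Norm E] (K : Set E) (x : E) : Prop where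
  mem : x ∈ K
  norm_le : ∀ y ∈ K, ‖x‖ ≤ ‖y‖

/-- An extended-real-valued function is proper if it never takes the value `-∞` and is not
identically `+∞`. -/
structure IsProper {X : Type*} (h : X → EReal) : Prop where
  ne_bot : ∀ u, h u ≠ ⊥
  exists_ne_top : ∃ u, h u ≠ ⊤

lemma IsProper.coe_toReal {X : Type*} {h : X → EReal} {u : X} (hp : IsProper h)
    (hu : h u ≠ ⊤) : ((h u).toReal : EReal) = h u :=
  EReal.coe_toReal hu (hp.ne_bot u)

/-- Convexity of an extended-real-valued function. Mathlib's `ConvexOn` does not apply, since `ℝ`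
does not act on `EReal` by scalar multiplication. -/
def IsConvexFun {E : Type*} [AddCommGroup E] [Module ℝ E] (h : E → EReal) : Prop :=
  ∀ u v : E, ∀ a b : ℝ, 0 ≤ a → 0 ≤ b → a + b = 1 →
    h (a • u + b • v) ≤ (a : EReal) * h u + (b : EReal) * h v

/-- `p` is a proximal point of `l` for `h` with parameter `g`: it minimizes
`μ ↦ h μ + ‖l - μ‖² / (2g)`. -/
def IsProx {E : Type*} [SeminormedAddCommGroup E] (h : E → EReal) (g : ℝ) (l p : E) : Prop :=
  ∀ μ : E, h p + ((‖l - p‖ ^ 2 / (2 * g) : ℝ) : EReal)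
    ≤ h μ + ((‖l - μ‖ ^ 2 / (2 * g) : ℝ) : EReal)

lemma IsProx.ne_top {E : Type*} [SeminormedAddCommGroup E] {h : E → EReal} {g : ℝ} {l p : E}
    (hprox : IsProx h g l p) (hp : IsProper h) : h p ≠ ⊤ := by
  obtain ⟨u, hu⟩ := hp.exists_ne_top
  intro h_top
  have le_u := hprox u
  rw [h_top, EReal.top_add_coe, ← hp.coe_toReal hu, ← EReal.coe_add, top_le_iff] at le_u
  exact EReal.coe_ne_top _ le_u

section ProximalPoint

variable {Y : Type*} [NormedAddCommGroup Y] [InnerProductSpace ℝ Y]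

section Hilbert

lemma norm_sq_le_add_sq_of_inner_nonneg {γ : ℝ} (hγ : 0 < γ) {u v e : Y}
    (huv : 0 ≤ ⟪u - v, γ • v - e⟫) : ‖v‖ ^ 2 ≤ ‖u‖ ^ 2 + (‖e‖ / γ) ^ 2 := by
  obtain ⟨d, rfl⟩ : ∃ d, e = γ • d := ⟨γ⁻¹ • e, (smul_inv_smul₀ hγ.ne' e).symm⟩
  have norm_d : ‖γ • d‖ / γ = ‖d‖ := by
    rw [norm_smul, Real.norm_of_nonneg hγ.le, mul_div_cancel_left₀ _ hγ.ne']
  have inner_nonneg : 0 ≤ ⟪u - v, v - d⟫ := by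
    rw [← smul_sub, inner_smul_right] at huv
    exact nonneg_of_mul_nonneg_right huv hγ
  have expand : ‖u - v + d‖ ^ 2 = ‖u‖ ^ 2 + ‖d‖ ^ 2 - ‖v‖ ^ 2 - 2 * ⟪u - v, v - d⟫ := by
    simp only [← real_inner_self_eq_norm_sq, inner_sub_left, inner_sub_right, inner_add_left,
      inner_add_right, real_inner_comm]
    ring
  rw [norm_d]
  linarith [sq_nonneg ‖u - v + d‖]

lemma two_mul_inner_sub_sub_smul_le {γ : ℝ} (hγ : 0 ≤ γ) (v w e : Y) :
    2 * ⟪v - w, e - γ • v⟫ ≤ 2 * (‖v - w‖ * ‖e‖) - γ * (‖v‖ ^ 2 - ‖w‖ ^ 2) := by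
  have expand : 2 * ⟪v - w, e - γ • v⟫
      = 2 * ⟪v - w, e⟫ - γ * (‖v‖ ^ 2 - ‖w‖ ^ 2) - γ * ‖v - w‖ ^ 2 := by
    simp only [← real_inner_self_eq_norm_sq, inner_sub_left, inner_sub_right, inner_smul_right,
      real_inner_comm]
    ring
  linarith [real_inner_le_norm (v - w) e, mul_nonneg hγ (sq_nonneg ‖v - w‖)]

lemma IsMinNormIn.norm_sub_sq_le {K : Set Y} {x y : Y} (hx : IsMinNormIn K x) (hK : Convex ℝ K)
    (hy : y ∈ K) : ‖y - x‖ ^ 2 ≤ ‖y‖ ^ 2 - ‖x‖ ^ 2 := by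
  have : Nonempty K := ⟨⟨x, hx.mem⟩⟩
  have x_is_projection_of_zero : ‖0 - x‖ = ⨅ z : K, ‖0 - (z : Y)‖ := by
    simp only [zero_sub, norm_neg]
    exact le_antisymm (le_ciInf fun z => hx.norm_le z z.2)
      (ciInf_le ⟨0, Set.forall_mem_range.2 fun z => norm_nonneg _⟩ (⟨x, hx.mem⟩ : K))
  have obtuse :=
    (norm_eq_iInf_iff_real_inner_le_zero hK hx.mem).1 x_is_projection_of_zero y hy
  rw [zero_sub, inner_neg_left, inner_sub_right, real_inner_self_eq_norm_sq] at obtuse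
  rw [norm_sub_sq_real, real_inner_comm]
  linarith

end Hilbert

section ConvexAnalysis

/-- The range of the subdifferential. -/
def subdiffRange (h : Y → EReal) : Set Y :=
  {v | ∃ u, v ∈ subdiff h u}

/-- The effective domain of the Fenchel conjugate. -/
def fenchelDomain (h : Y → EReal) : Set Y :=
  {w | fenchel h w < ⊤}

variable {h : Y → EReal} {u v w x : Y}

lemma ne_top_of_mem_subdiff (hp : IsProper h) (hv : v ∈ subdiff h u) : h u ≠ ⊤ := by
  obtain ⟨x, hx⟩ := hp.exists_ne_top
  intro hu
  have le_x := hv x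
  rw [hu, EReal.top_add_coe] at le_x
  exact hx (top_le_iff.1 le_x)

lemma toReal_add_inner_le (hp : IsProper h) (hv : v ∈ subdiff h u) (hx : h x ≠ ⊤) :
    (h u).toReal + ⟪v, x - u⟫ ≤ (h x).toReal := by
  have le_x := hv x
  rwa [← hp.coe_toReal (ne_top_of_mem_subdiff hp hv), ← hp.coe_toReal hx, ← EReal.coe_add,
    EReal.coe_le_coe_iff] at le_x

lemma inner_sub_sub_nonneg_of_mem_subdiff {p q : Y} (hp : IsProper h) (hu : u ∈ subdiff h p)
    (hv : v ∈ subdiff h q) : 0 ≤ ⟪u - v, p - q⟫ := by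
  have at_p := toReal_add_inner_le hp hu (ne_top_of_mem_subdiff hp hv)
  have at_q := toReal_add_inner_le hp hv (ne_top_of_mem_subdiff hp hu)
  rw [← neg_sub p q, inner_neg_right] at at_p
  rw [inner_sub_left]
  linarith

lemma coe_sub_le_coe_iff {a c : ℝ} {z : EReal} :
    (a : EReal) - z ≤ c ↔ ((a - c : ℝ) : EReal) ≤ z := by
  induction z with
  | bot => simp [sub_eq_add_neg]
  | top => simp
  | coe z =>
    rw [← EReal.coe_sub, EReal.coe_le_coe_iff, EReal.coe_le_coe_iff]
    exact sub_le_comm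

lemma mem_fenchelDomain_iff :
    w ∈ fenchelDomain h ↔ ∃ C : ℝ, ∀ u, ((⟪w, u⟫ - C : ℝ) : EReal) ≤ h u := by
  simp only [← coe_sub_le_coe_iff, ← iSup_le_iff]
  constructor
  · intro hw
    obtain ⟨C, lt_C, -⟩ := EReal.lt_iff_exists_real_btwn.1 hw
    exact ⟨C, lt_C.le⟩
  · rintro ⟨C, hC⟩
    exact hC.trans_lt (EReal.coe_lt_top C)

lemma convex_fenchelDomain : Convex ℝ (fenchelDomain h) := by
  intro w₁ hw₁ w₂ hw₂ a b ha hb hab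
  obtain ⟨C₁, hC₁⟩ := mem_fenchelDomain_iff.1 hw₁
  obtain ⟨C₂, hC₂⟩ := mem_fenchelDomain_iff.1 hw₂
  refine mem_fenchelDomain_iff.2 ⟨a * C₁ + b * C₂, fun u => ?_⟩
  have combo : ⟪a • w₁ + b • w₂, u⟫ - (a * C₁ + b * C₂)
      ≤ max (⟪w₁, u⟫ - C₁) (⟪w₂, u⟫ - C₂) := by
    refine le_trans (le_of_eq ?_) (Convex.combo_le_max _ _ ha hb hab)
    simp only [inner_add_left, real_inner_smul_left, smul_eq_mul]
    ring
  refine (EReal.coe_le_coe_iff.2 combo).trans ?_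
  rw [EReal.coe_strictMono.monotone.map_max]
  exact max_le (hC₁ u) (hC₂ u)

lemma subdiffRange_subset_fenchelDomain (hp : IsProper h) :
    subdiffRange h ⊆ fenchelDomain h := by
  rintro v ⟨u, hv⟩
  refine mem_fenchelDomain_iff.2 ⟨⟪v, u⟫ - (h u).toReal, fun x => ?_⟩
  convert hv x using 1
  rw [← hp.coe_toReal (ne_top_of_mem_subdiff hp hv), ← EReal.coe_add, inner_sub_right,
    EReal.toReal_coe]
  congr 1
  ring

section Prox

variable {g : ℝ} {l p μ : Y}

lemma IsProx.toReal_add_inner_le_add_mul (hprox : IsProx h g l p) (hp : IsProper h)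
    (hc : IsConvexFun h) (hμ : h μ ≠ ⊤) {t : ℝ} (ht : t ∈ Set.Ioc 0 1) :
    (h p).toReal + ⟪g⁻¹ • (l - p), μ - p⟫ ≤ (h μ).toReal + t * (‖μ - p‖ ^ 2 / (2 * g)) := by
  have optimality :
      (h p).toReal + ‖l - p‖ ^ 2 / (2 * g)
        ≤ (1 - t) * (h p).toReal + t * (h μ).toReal
          + ‖l - ((1 - t) • p + t • μ)‖ ^ 2 / (2 * g) := by
    have along_segment := (hprox ((1 - t) • p + t • μ)).trans
      (add_le_add_left (hc p μ (1 - t) t (sub_nonneg.2 ht.2) ht.1.le (sub_add_cancel 1 t)) _)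
    rw [← hp.coe_toReal (hprox.ne_top hp), ← hp.coe_toReal hμ] at along_segment
    exact_mod_cast along_segment
  have norm_sq_segment : ‖l - ((1 - t) • p + t • μ)‖ ^ 2
      = ‖l - p‖ ^ 2 - 2 * (t * ⟪l - p, μ - p⟫) + t ^ 2 * ‖μ - p‖ ^ 2 := by
    rw [show l - ((1 - t) • p + t • μ) = (l - p) - t • (μ - p) by module, norm_sub_sq_real,
      inner_smul_right, norm_smul, mul_pow, Real.norm_eq_abs, sq_abs]
  rw [norm_sq_segment] at optimality
  rw [real_inner_smul_left]
  refine le_of_mul_le_mul_left ?_ ht.1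
  linear_combination optimality

lemma IsProx.inv_smul_sub_mem_subdiff (hprox : IsProx h g l p) (hp : IsProper h)
    (hc : IsConvexFun h) : g⁻¹ • (l - p) ∈ subdiff h p := by
  intro μ
  by_cases hμ : h μ = ⊤
  · rw [hμ]; exact le_top
  rw [← hp.coe_toReal (hprox.ne_top hp), ← hp.coe_toReal hμ, ← EReal.coe_add,
    EReal.coe_le_coe_iff]
  have limit : Tendsto (fun t => (h μ).toReal + t * (‖μ - p‖ ^ 2 / (2 * g)))
      (nhdsWithin 0 (Set.Ioi 0)) (nhds (h μ).toReal) :=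
    Continuous.tendsto' (by fun_prop) _ _ (by simp) |>.mono_left nhdsWithin_le_nhds
  refine ge_of_tendsto limit ?_
  filter_upwards [Ioc_mem_nhdsGT one_pos] with t ht
  exact hprox.toReal_add_inner_le_add_mul hp hc hμ ht

end Prox

end ConvexAnalysis

/-- An inexact proximal point (IPPA) sequence for `h`: `lamstar (k + 1)` is the exact proximal
point of `lam k` with step size `γ k`, and `lam (k + 1)` approximates it up to `ε (k + 1)`. The
values of `ε`, `lamstar`, `sstar` and `ss` at `0` are not part of the sequence. -/
structure IsIPPA (h : Y → EReal) (γ ε : ℕ → ℝ) (lam lamstar sstar ss : ℕ → Y) : Prop where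
  step_pos : ∀ k, 0 < γ k
  isProx : ∀ k, IsProx h (γ k) (lam k) (lamstar (k + 1))
  sstar_succ : ∀ k, sstar (k + 1) = (γ k)⁻¹ • (lam k - lamstar (k + 1))
  error_le : ∀ k, ‖lam (k + 1) - lamstar (k + 1)‖ ≤ ε (k + 1)
  ss_succ : ∀ k, ss (k + 1) = (γ k)⁻¹ • (lam k - lam (k + 1))

/-- The quantity `Γ (‖s⋆‖² - ‖w‖²) + 2 (h(λ⋆) - ⟪w, λ⋆⟫)` attached to the `(k + 1)`-st exact
iterate, where `Γ` is the sum of the first `k + 1` step sizes. It is nonincreasing up to summable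
errors. -/
def ippaEnergy (h : Y → EReal) (γ : ℕ → ℝ) (lamstar sstar : ℕ → Y) (w : Y) (k : ℕ) : ℝ :=
  (∑ i ∈ Finset.range (k + 1), γ i) * (‖sstar (k + 1)‖ ^ 2 - ‖w‖ ^ 2)
    + 2 * ((h (lamstar (k + 1))).toReal - ⟪w, lamstar (k + 1)⟫)

namespace IsIPPA

variable {h : Y → EReal} {γ ε : ℕ → ℝ} {lam lamstar sstar ss : ℕ → Y} {w sbar : Y}

lemma error_nonneg (H : IsIPPA h γ ε lam lamstar sstar ss) (k : ℕ) : 0 ≤ ε (k + 1) :=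
  (norm_nonneg _).trans (H.error_le k)

lemma sum_step_nonneg (H : IsIPPA h γ ε lam lamstar sstar ss) (n : ℕ) :
    0 ≤ ∑ i ∈ Finset.range n, γ i :=
  Finset.sum_nonneg fun i _ => (H.step_pos i).le

lemma step_zero_le_sum (H : IsIPPA h γ ε lam lamstar sstar ss) (k : ℕ) :
    γ 0 ≤ ∑ i ∈ Finset.range (k + 1), γ i :=
  Finset.single_le_sum (fun i _ => (H.step_pos i).le) (Finset.mem_range.2 k.succ_pos)

lemma sum_step_pos (H : IsIPPA h γ ε lam lamstar sstar ss) (k : ℕ) :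
    0 < ∑ i ∈ Finset.range (k + 1), γ i :=
  (H.step_pos 0).trans_le (H.step_zero_le_sum k)

lemma sstar_mem_subdiff (H : IsIPPA h γ ε lam lamstar sstar ss) (hp : IsProper h)
    (hc : IsConvexFun h) (k : ℕ) : sstar (k + 1) ∈ subdiff h (lamstar (k + 1)) := by
  rw [H.sstar_succ]
  exact (H.isProx k).inv_smul_sub_mem_subdiff hp hc

lemma lamstar_sub_lamstar_succ (H : IsIPPA h γ ε lam lamstar sstar ss) (k : ℕ) :
    lamstar (k + 1) - lamstar (k + 2)
      = γ (k + 1) • sstar (k + 2) - (lam (k + 1) - lamstar (k + 1)) := by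
  rw [H.sstar_succ, smul_inv_smul₀ (H.step_pos _).ne']
  abel

lemma norm_sstar_succ_sq_le (H : IsIPPA h γ ε lam lamstar sstar ss) (hp : IsProper h)
    (hc : IsConvexFun h) (k : ℕ) :
    ‖sstar (k + 2)‖ ^ 2 ≤ ‖sstar (k + 1)‖ ^ 2 + (ε (k + 1) / γ (k + 1)) ^ 2 := by
  have step_pos := H.step_pos (k + 1)
  have monotone := inner_sub_sub_nonneg_of_mem_subdiff hp (H.sstar_mem_subdiff hp hc k)
    (H.sstar_mem_subdiff hp hc (k + 1))
  rw [H.lamstar_sub_lamstar_succ] at monotone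
  grw [norm_sq_le_add_sq_of_inner_nonneg step_pos monotone, H.error_le k]

lemma summable_error_div_step_sq (H : IsIPPA h γ ε lam lamstar sstar ss)
    (hA3 : Summable fun k => (ε (k + 1) / γ (k + 1)) ^ 2 * ∑ i ∈ Finset.range (k + 1), γ i) :
    Summable fun k => (ε (k + 1) / γ (k + 1)) ^ 2 := by
  refine Summable.of_nonneg_of_le (fun k => sq_nonneg _) (fun k => ?_) (hA3.div_const (γ 0))
  rw [mul_div_assoc]
  exact le_mul_of_one_le_right (sq_nonneg _)
    ((one_le_div (H.step_pos 0)).2 (H.step_zero_le_sum k))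

lemma exists_norm_sstar_le (H : IsIPPA h γ ε lam lamstar sstar ss) (hp : IsProper h)
    (hc : IsConvexFun h)
    (hA3 : Summable fun k => (ε (k + 1) / γ (k + 1)) ^ 2 * ∑ i ∈ Finset.range (k + 1), γ i) :
    ∃ M, 0 ≤ M ∧ ∀ k, ‖sstar (k + 1)‖ ≤ M := by
  obtain ⟨B, hB⟩ := bddAbove_range_of_succ_le_add (a := fun k => ‖sstar (k + 1)‖ ^ 2)
    (fun k => sq_nonneg _) (H.summable_error_div_step_sq hA3) (H.norm_sstar_succ_sq_le hp hc)
  exact ⟨√B, Real.sqrt_nonneg B, fun k => Real.le_sqrt_of_sq_le (hB ⟨k, rfl⟩)⟩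

lemma ippaEnergy_succ_le (H : IsIPPA h γ ε lam lamstar sstar ss) (hp : IsProper h)
    (hc : IsConvexFun h) (w : Y) {M : ℝ} (hM : ∀ k, ‖sstar (k + 1)‖ ≤ M) (k : ℕ) :
    ippaEnergy h γ lamstar sstar w (k + 1) ≤ ippaEnergy h γ lamstar sstar w k
      + ((ε (k + 1) / γ (k + 1)) ^ 2 * (∑ i ∈ Finset.range (k + 1), γ i)
        + 2 * (M + ‖w‖) * ε (k + 1)) := by
  set p := lamstar (k + 1)
  set q := lamstar (k + 2)
  set v := sstar (k + 2)
  set e := lam (k + 1) - p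
  have subgradient : (h q).toReal + ⟪v, p - q⟫ ≤ (h p).toReal :=
    toReal_add_inner_le hp (H.sstar_mem_subdiff hp hc (k + 1)) ((H.isProx k).ne_top hp)
  have gap_change : ⟪w, p⟫ - ⟪w, q⟫ - ⟪v, p - q⟫ = ⟪v - w, e - γ (k + 1) • v⟫ := by
    rw [← inner_sub_right, ← neg_sub (γ (k + 1) • v) e, ← H.lamstar_sub_lamstar_succ k,
      inner_neg_right, inner_sub_left]
    ring
  have gap_decrease := two_mul_inner_sub_sub_smul_le (H.step_pos (k + 1)).le v w e
  have error_term : ‖v - w‖ * ‖e‖ ≤ (M + ‖w‖) * ε (k + 1) := by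
    have norm_v_sub_w : ‖v - w‖ ≤ M + ‖w‖ := (norm_sub_le v w).trans (by gcongr; exact hM (k + 1))
    exact mul_le_mul norm_v_sub_w (H.error_le k) (norm_nonneg _)
      ((norm_nonneg _).trans norm_v_sub_w)
  have weighted_monotonicity := mul_le_mul_of_nonneg_left (H.norm_sstar_succ_sq_le hp hc k)
    (H.sum_step_nonneg (k + 1))
  unfold ippaEnergy
  rw [Finset.sum_range_succ _ (k + 1)]
  linarith

lemma exists_norm_sstar_sq_sub_le_div (H : IsIPPA h γ ε lam lamstar sstar ss) (hp : IsProper h)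
    (hc : IsConvexFun h) (hA1 : Summable ε)
    (hA3 : Summable fun k => (ε (k + 1) / γ (k + 1)) ^ 2 * ∑ i ∈ Finset.range (k + 1), γ i)
    (hw : w ∈ fenchelDomain h) :
    ∃ K, ∀ k, ‖sstar (k + 1)‖ ^ 2 - ‖w‖ ^ 2 ≤ K / ∑ i ∈ Finset.range (k + 1), γ i := by
  obtain ⟨M, hM₀, hM⟩ := H.exists_norm_sstar_le hp hc hA3
  have increments_summable : Summable fun k =>
      (ε (k + 1) / γ (k + 1)) ^ 2 * (∑ i ∈ Finset.range (k + 1), γ i)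
        + 2 * (M + ‖w‖) * ε (k + 1) :=
    hA3.add (((summable_nat_add_iff 1).2 hA1).mul_left _)
  have increments_nonneg (k : ℕ) :
      0 ≤ (ε (k + 1) / γ (k + 1)) ^ 2 * (∑ i ∈ Finset.range (k + 1), γ i)
        + 2 * (M + ‖w‖) * ε (k + 1) := by
    have := H.sum_step_nonneg (k + 1)
    have := H.error_nonneg k
    positivity
  obtain ⟨B, hB⟩ := bddAbove_range_of_succ_le_add increments_nonneg increments_summable
    (H.ippaEnergy_succ_le hp hc w hM)
  obtain ⟨C, hC⟩ := mem_fenchelDomain_iff.1 hw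
  refine ⟨B + 2 * C, fun k => (le_div_iff₀' (H.sum_step_pos k)).2 ?_⟩
  have energy_le : ippaEnergy h γ lamstar sstar w k ≤ B := hB ⟨k, rfl⟩
  have affine_minorant : ⟪w, lamstar (k + 1)⟫ - C ≤ (h (lamstar (k + 1))).toReal := by
    have le_h := hC (lamstar (k + 1))
    rwa [← hp.coe_toReal ((H.isProx k).ne_top hp), EReal.coe_le_coe_iff] at le_h
  unfold ippaEnergy at energy_le
  linarith

lemma eventually_norm_sstar_sq_lt (H : IsIPPA h γ ε lam lamstar sstar ss) (hp : IsProper h)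
    (hc : IsConvexFun h) (hA1 : Summable ε)
    (hA3 : Summable fun k => (ε (k + 1) / γ (k + 1)) ^ 2 * ∑ i ∈ Finset.range (k + 1), γ i)
    (hA5 : Tendsto (fun n => ∑ i ∈ Finset.range n, γ i) atTop atTop)
    (hw : w ∈ fenchelDomain h) {a : ℝ} (ha : ‖w‖ ^ 2 < a) :
    ∀ᶠ k in atTop, ‖sstar (k + 1)‖ ^ 2 < a := by
  obtain ⟨K, hK⟩ := H.exists_norm_sstar_sq_sub_le_div hp hc hA1 hA3 hw
  have remainder : Tendsto (fun k => K / ∑ i ∈ Finset.range (k + 1), γ i) atTop (nhds 0) :=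
    ((tendsto_add_atTop_iff_nat 1).2 hA5).const_div_atTop K
  filter_upwards [remainder.eventually_lt_const (sub_pos.2 ha)] with k hk
  linarith [hK k]

lemma isMinNormIn_closure_fenchelDomain (H : IsIPPA h γ ε lam lamstar sstar ss) (hp : IsProper h)
    (hc : IsConvexFun h) (hA1 : Summable ε)
    (hA3 : Summable fun k => (ε (k + 1) / γ (k + 1)) ^ 2 * ∑ i ∈ Finset.range (k + 1), γ i)
    (hA5 : Tendsto (fun n => ∑ i ∈ Finset.range n, γ i) atTop atTop)
    (hsbar : IsMinNormIn (closure (subdiffRange h)) sbar) :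
    IsMinNormIn (closure (fenchelDomain h)) sbar where
  mem := closure_mono (subdiffRange_subset_fenchelDomain hp) hsbar.mem
  norm_le := by
    refine fun w hw => le_on_closure (f := fun _ => ‖sbar‖) (fun w hw => ?_) continuousOn_const
      continuous_norm.continuousOn hw
    refine le_of_sq_le_sq ?_ (norm_nonneg w)
    refine le_of_forall_gt fun a ha => ?_
    obtain ⟨k, hk⟩ := (H.eventually_norm_sstar_sq_lt hp hc hA1 hA3 hA5 hw ha).exists
    have := hsbar.norm_le _ (subset_closure ⟨_, H.sstar_mem_subdiff hp hc k⟩)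
    exact lt_of_le_of_lt (by gcongr) hk

lemma norm_sstar_sub_sq_le (H : IsIPPA h γ ε lam lamstar sstar ss) (hp : IsProper h)
    (hc : IsConvexFun h) (hsbar : IsMinNormIn (closure (fenchelDomain h)) sbar) (k : ℕ) :
    ‖sstar (k + 1) - sbar‖ ^ 2 ≤ ‖sstar (k + 1)‖ ^ 2 - ‖sbar‖ ^ 2 :=
  hsbar.norm_sub_sq_le convex_fenchelDomain.closure <| subset_closure <|
    subdiffRange_subset_fenchelDomain hp ⟨_, H.sstar_mem_subdiff hp hc k⟩

lemma tendsto_sstar (H : IsIPPA h γ ε lam lamstar sstar ss) (hp : IsProper h)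
    (hc : IsConvexFun h) (hA1 : Summable ε)
    (hA3 : Summable fun k => (ε (k + 1) / γ (k + 1)) ^ 2 * ∑ i ∈ Finset.range (k + 1), γ i)
    (hA5 : Tendsto (fun n => ∑ i ∈ Finset.range n, γ i) atTop atTop)
    (hsbar : IsMinNormIn (closure (fenchelDomain h)) sbar) :
    Tendsto sstar atTop (nhds sbar) := by
  have dist_sq_le := H.norm_sstar_sub_sq_le hp hc hsbar
  have norm_sq_tendsto : Tendsto (fun k => ‖sstar (k + 1)‖ ^ 2) atTop (nhds (‖sbar‖ ^ 2)) := by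
    refine tendsto_order.2 ⟨fun a ha => .of_forall fun k => ?_, fun a ha => ?_⟩
    · linarith [dist_sq_le k, sq_nonneg ‖sstar (k + 1) - sbar‖]
    · obtain ⟨w, hwa, hw⟩ := mem_closure_iff.1 hsbar.mem {x | ‖x‖ ^ 2 < a}
        (isOpen_lt (by fun_prop) continuous_const) ha
      exact H.eventually_norm_sstar_sq_lt hp hc hA1 hA3 hA5 hw hwa
  have dist_sq_tendsto : Tendsto (fun k => ‖sstar (k + 1) - sbar‖ ^ 2) atTop (nhds 0) :=
    squeeze_zero (fun k => sq_nonneg _) dist_sq_le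
      (sub_self (‖sbar‖ ^ 2) ▸ norm_sq_tendsto.sub_const (‖sbar‖ ^ 2))
  rw [← tendsto_add_atTop_iff_nat 1, tendsto_iff_norm_sub_tendsto_zero]
  simpa using dist_sq_tendsto.sqrt

lemma isBigO_norm_sstar_sq_sub (H : IsIPPA h γ ε lam lamstar sstar ss) (hp : IsProper h)
    (hc : IsConvexFun h) (hA1 : Summable ε)
    (hA3 : Summable fun k => (ε (k + 1) / γ (k + 1)) ^ 2 * ∑ i ∈ Finset.range (k + 1), γ i)
    (hsbar : IsMinNormIn (closure (fenchelDomain h)) sbar) (hdom : sbar ∈ fenchelDomain h) :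
    (fun n => ‖sstar n‖ ^ 2 - ‖sbar‖ ^ 2) =O[atTop]
      fun n => 1 / ∑ i ∈ Finset.range n, γ i := by
  obtain ⟨K, hK⟩ := H.exists_norm_sstar_sq_sub_le_div hp hc hA1 hA3 hdom
  refine isBigO_comp_succ_iff.1 (.of_bound K (.of_forall fun k => ?_))
  have gap_nonneg := (sq_nonneg _).trans (H.norm_sstar_sub_sq_le hp hc hsbar k)
  rw [Real.norm_of_nonneg gap_nonneg,
    Real.norm_of_nonneg (one_div_nonneg.2 (H.sum_step_nonneg (k + 1))), mul_one_div]
  exact hK k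

lemma isBigO_norm_sstar_sub (H : IsIPPA h γ ε lam lamstar sstar ss) (hp : IsProper h)
    (hc : IsConvexFun h) (hA1 : Summable ε)
    (hA3 : Summable fun k => (ε (k + 1) / γ (k + 1)) ^ 2 * ∑ i ∈ Finset.range (k + 1), γ i)
    (hsbar : IsMinNormIn (closure (fenchelDomain h)) sbar) (hdom : sbar ∈ fenchelDomain h) :
    (fun n => ‖sstar n - sbar‖) =O[atTop] fun n => 1 / √(∑ i ∈ Finset.range n, γ i) := by
  refine isBigO_one_div_sqrt_of_sq_isBigO H.sum_step_nonneg
    (.trans ?_ (H.isBigO_norm_sstar_sq_sub hp hc hA1 hA3 hsbar hdom))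
  refine isBigO_comp_succ_iff.1 (.of_norm_le fun k => ?_)
  rw [Real.norm_of_nonneg (sq_nonneg _)]
  exact H.norm_sstar_sub_sq_le hp hc hsbar k

lemma norm_ss_sub_sstar_le (H : IsIPPA h γ ε lam lamstar sstar ss) (k : ℕ) :
    ‖ss (k + 1) - sstar (k + 1)‖ ≤ ε (k + 1) / γ k := by
  have step_pos := H.step_pos k
  rw [H.ss_succ, H.sstar_succ, ← smul_sub, sub_sub_sub_cancel_left, norm_smul, norm_inv,
    Real.norm_of_nonneg step_pos.le, inv_mul_eq_div, norm_sub_rev]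
  gcongr
  exact H.error_le k

lemma isBigO_ss_sub_sstar (H : IsIPPA h γ ε lam lamstar sstar ss)
    (hA2 : (fun k => ε (k + 1) / γ k * ∑ i ∈ Finset.range (k + 1), γ i)
      =O[atTop] fun _ => (1 : ℝ)) :
    (fun n => ss n - sstar n) =O[atTop] fun n => 1 / ∑ i ∈ Finset.range n, γ i := by
  refine isBigO_comp_succ_iff.1 (.trans (.of_norm_le H.norm_ss_sub_sstar_le) ?_)
  refine (hA2.mul (isBigO_refl (fun k => 1 / ∑ i ∈ Finset.range (k + 1), γ i) atTop)).congr
    (fun k => ?_) (fun k => one_mul _)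
  rw [mul_one_div, mul_div_cancel_right₀ _ (H.sum_step_pos k).ne']

end IsIPPA

theorem statement6_general {h : Y → EReal} {γ ε : ℕ → ℝ} {lam lamstar sstar ss : ℕ → Y} {sbar : Y}
    (hp : IsProper h) (hc : IsConvexFun h) (H : IsIPPA h γ ε lam lamstar sstar ss)
    (hA1 : Summable ε)
    (hA2 : (fun k => ε (k + 1) / γ k * ∑ i ∈ Finset.range (k + 1), γ i)
      =O[atTop] fun _ => (1 : ℝ))
    (hA3 : Summable fun k => (ε (k + 1) / γ (k + 1)) ^ 2 * ∑ i ∈ Finset.range (k + 1), γ i)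
    (hA5 : Tendsto (fun n => ∑ i ∈ Finset.range n, γ i) atTop atTop)
    (hsbar : IsMinNormIn (closure (subdiffRange h)) sbar) :
    Tendsto sstar atTop (nhds sbar) ∧ Tendsto ss atTop (nhds sbar) ∧
    (sbar ∈ fenchelDomain h →
      ((fun n => ‖sstar n‖ ^ 2 - ‖sbar‖ ^ 2) =O[atTop]
        fun n => 1 / ∑ i ∈ Finset.range n, γ i) ∧
      ((fun n => ‖ss n‖ ^ 2 - ‖sbar‖ ^ 2) =O[atTop]
        fun n => 1 / ∑ i ∈ Finset.range n, γ i) ∧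
      ((fun n => ‖sstar n - sbar‖) =O[atTop] fun n => 1 / √(∑ i ∈ Finset.range n, γ i)) ∧
      ((fun n => ‖ss n - sbar‖) =O[atTop] fun n => 1 / √(∑ i ∈ Finset.range n, γ i))) := by
  have sbar_min := H.isMinNormIn_closure_fenchelDomain hp hc hA1 hA3 hA5 hsbar
  have sstar_tendsto := H.tendsto_sstar hp hc hA1 hA3 hA5 sbar_min
  have perturbation := H.isBigO_ss_sub_sstar hA2
  have ss_tendsto : Tendsto ss atTop (nhds sbar) := by
    simpa using (perturbation.trans_tendsto (hA5.const_div_atTop 1)).add sstar_tendsto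
  refine ⟨sstar_tendsto, ss_tendsto, fun hdom => ?_⟩
  have sstar_sq_rate := H.isBigO_norm_sstar_sq_sub hp hc hA1 hA3 sbar_min hdom
  have sstar_rate := H.isBigO_norm_sstar_sub hp hc hA1 hA3 sbar_min hdom
  refine ⟨sstar_sq_rate, ?_, sstar_rate, ?_⟩
  · exact ((isBigO_norm_sq_sub_norm_sq (ss_tendsto.isBigO_one ℝ) (sstar_tendsto.isBigO_one ℝ)
      perturbation).add sstar_sq_rate).congr_left fun n => sub_add_sub_cancel _ _ _
  · have perturbation_rate := perturbation.trans (isBigO_one_div_one_div_sqrt_of_tendsto_atTop hA5)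
    exact ((perturbation_rate.add sstar_rate.of_norm_left).congr_left
      fun n => sub_add_sub_cancel _ _ _).norm_left

end ProximalPoint

theorem statement6
    {Y : Type*}
    [NormedAddCommGroup Y] [InnerProductSpace ℝ Y] [CompleteSpace Y]
    (h : Y → EReal)
    (hh_bot : ∀ u : Y, h u ≠ ⊥) (hh_top : ∃ u : Y, h u ≠ ⊤)
    (hh_lsc : LowerSemicontinuous h)
    (hh_cvx : ∀ u v : Y, ∀ a b : ℝ, 0 ≤ a → 0 ≤ b → a + b = 1 →
      h (a • u + b • v) ≤ (a : EReal) * h u + (b : EReal) * h v)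
    (γ : ℕ → ℝ) (hγ : ∀ k : ℕ, 0 < γ k) (ε : ℕ → ℝ) (hε : ∀ k : ℕ, 0 ≤ ε k)
    (lam lamstar sstar ss : ℕ → Y)
    (hmin : ∀ (k : ℕ) (μ : Y),
      h (lamstar (k+1)) + ((‖lam k - lamstar (k+1)‖ ^ 2 / (2 * γ k) : ℝ) : EReal)
        ≤ h μ + ((‖lam k - μ‖ ^ 2 / (2 * γ k) : ℝ) : EReal))
    (hsstar : ∀ k : ℕ, sstar (k+1) = (γ k)⁻¹ • (lam k - lamstar (k+1)))
    (herr : ∀ k : ℕ, ‖lam (k+1) - lamstar (k+1)‖ ≤ ε (k+1))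
    (hss : ∀ k : ℕ, ss (k+1) = (γ k)⁻¹ • (lam k - lam (k+1)))
    (A1 : Summable ε)
    (A2 : (fun k : ℕ => ε (k+1) / γ k * ∑ i ∈ Finset.range (k+1), γ i)
        =O[atTop] fun k : ℕ => 1 / Real.sqrt (∑ i ∈ Finset.range (k+1), γ i))
    (A3 : Summable fun k : ℕ => (ε (k+1) / γ (k+1)) ^ 2 * ∑ i ∈ Finset.range (k+1), γ i)
    (A4 : Summable fun k : ℕ => ε (k+1) / γ (k+1) * ∑ i ∈ Finset.range (k+1), γ i)
    (A5 : Tendsto (fun n : ℕ => ∑ i ∈ Finset.range n, γ i) atTop atTop)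
    (sbar : Y)
    (hsbar_mem : sbar ∈ closure {v : Y | ∃ u : Y, v ∈ subdiff h u})
    (hsbar_min : ∀ v ∈ closure {v : Y | ∃ u : Y, v ∈ subdiff h u}, ‖sbar‖ ≤ ‖v‖)
    :
    Tendsto (fun k : ℕ => sstar k) atTop (nhds sbar) ∧
    Tendsto (fun k : ℕ => ss k) atTop (nhds sbar) ∧
    (fenchel h sbar < ⊤ →
      ((fun N : ℕ => ‖sstar N‖ ^ 2 - ‖sbar‖ ^ 2) =O[atTop]
          fun N : ℕ => 1 / ∑ i ∈ Finset.range N, γ i) ∧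
      ((fun N : ℕ => ‖ss N‖ ^ 2 - ‖sbar‖ ^ 2) =O[atTop]
          fun N : ℕ => 1 / ∑ i ∈ Finset.range N, γ i) ∧
      ((fun N : ℕ => ‖sstar N - sbar‖) =O[atTop]
          fun N : ℕ => 1 / Real.sqrt (∑ i ∈ Finset.range N, γ i)) ∧
      ((fun N : ℕ => ‖ss N - sbar‖) =O[atTop]
          fun N : ℕ => 1 / Real.sqrt (∑ i ∈ Finset.range N, γ i))) := by
  exact statement6_general ⟨hh_bot, hh_top⟩ hh_cvx ⟨hγ, hmin, hsstar, herr, hss⟩ A1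
    (A2.trans (isBigO_one_div_sqrt_one_of_tendsto_atTop ((tendsto_add_atTop_iff_nat 1).2 A5)))
    A3 A5 ⟨hsbar_mem, hsbar_min⟩
end
end
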